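/- Let p be a prime and let φ be an m × n matrix over Z/p² whose entries are chosen independently and uniformly at random from {0, 1, ..., p²−1}. Let ψ = φ̄ be the reduction of φ modulo p, let k = dim(ker ψ), and let β_φ : ker ψ → coker ψ be the Bockstein homomorphism defined by φ. Then for any fixed Z/p-linear map β : ker ψ → coker ψ, the conditional probability P(β_φ = β | φ̄ = ψ) equals 1/p^(k(m−n+k)). Equivalently: for any fixed Z/p-linear map ψ : (Z/p)ⁿ → (Z/p)ᵐ with k = dim(ker ψ) and any β ∈ Hom(ker ψ, coker ψ), the number of Z/p²-linear maps φ : (Z/p²)ⁿ → (Z/p²)ᵐ with φ̄ = ψ and β_φ = β, divided by the number of Z/p²-linear maps φ with φ̄ = ψ, equals 1/p^(k(m−n+k)). -/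

import Mathlib

/-- The submodule `pV` of a `ℤ/p²`-module `V`, i.e. the image of multiplication by `p`. -/
def pSub (p : ℕ) (V : Type*) [AddCommGroup V] [Module (ZMod (p ^ 2)) V] :
    Submodule (ZMod (p ^ 2)) V :=
  LinearMap.range ((p : ZMod (p ^ 2)) • (LinearMap.id : V →ₗ[ZMod (p ^ 2)] V))

lemma smul_mem_pSub (p : ℕ) (V : Type*) [AddCommGroup V] [Module (ZMod (p ^ 2)) V] (x : V) :
    (p : ZMod (p ^ 2)) • x ∈ pSub p V :=
  ⟨x, rfl⟩

/-- `V/pV` is a `ℤ/p`-vector space. -/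
noncomputable instance quotModZMod (p : ℕ) [NeZero p] (V : Type*) [AddCommGroup V]
    [Module (ZMod (p ^ 2)) V] : Module (ZMod p) (V ⧸ pSub p V) :=
  AddCommGroup.zmodModule (by
    intro x
    obtain ⟨v, rfl⟩ := Submodule.Quotient.mk_surjective _ x
    rw [← Nat.cast_smul_eq_nsmul (ZMod (p ^ 2)), ← Submodule.Quotient.mk_smul,
      Submodule.Quotient.mk_eq_zero]
    exact smul_mem_pSub p V v)

/-- The map `V/pV → W/pW` induced by a `ℤ/p²`-linear map `φ : V → W`, as a
`ℤ/p`-linear map. -/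
noncomputable def inducedMap (p : ℕ) [NeZero p] {V W : Type*} [AddCommGroup V]
    [Module (ZMod (p ^ 2)) V] [AddCommGroup W] [Module (ZMod (p ^ 2)) W]
    (φ : V →ₗ[ZMod (p ^ 2)] W) :
    (V ⧸ pSub p V) →ₗ[ZMod p] (W ⧸ pSub p W) :=
  ((Submodule.mapQ (pSub p V) (pSub p W) φ (by
      rintro x ⟨v, rfl⟩
      exact ⟨φ v, by simp⟩)).toAddMonoidHom).toZModLinearMap p

@[simp] lemma inducedMap_mk (p : ℕ) [NeZero p] {V W : Type*} [AddCommGroup V]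
    [Module (ZMod (p ^ 2)) V] [AddCommGroup W] [Module (ZMod (p ^ 2)) W]
    (φ : V →ₗ[ZMod (p ^ 2)] W) (v : V) :
    inducedMap p φ (Submodule.Quotient.mk v) = Submodule.Quotient.mk (φ v) := rfl

/-- `β : ker ψ → coker ψ` is *the* Bockstein homomorphism of a map `φ : V → W`
inducing `ψ` when, for every `v ∈ V` reducing into `ker ψ` and every `w` with
`φ v = p • w`, one has `β v̄ = (w + pW) + ψ(V/pV)`. -/
def IsBockstein (p : ℕ) [NeZero p] {V W : Type*} [AddCommGroup V]
    [Module (ZMod (p ^ 2)) V] [AddCommGroup W] [Module (ZMod (p ^ 2)) W]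
    (ψ : (V ⧸ pSub p V) →ₗ[ZMod p] (W ⧸ pSub p W)) (φ : V →ₗ[ZMod (p ^ 2)] W)
    (β : ↥(LinearMap.ker ψ) →ₗ[ZMod p] ((W ⧸ pSub p W) ⧸ LinearMap.range ψ)) : Prop :=
  ∀ (v : V) (hv : Submodule.Quotient.mk v ∈ LinearMap.ker ψ) (w : W),
    φ v = (p : ZMod (p ^ 2)) • w →
    β ⟨Submodule.Quotient.mk v, hv⟩ = Submodule.Quotient.mk (Submodule.Quotient.mk w)

section

variable {p : ℕ} {W : Type*} [AddCommGroup W] [Module (ZMod (p ^ 2)) W]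

lemma natCast_smul_natCast_smul (w : W) : (p : ZMod (p ^ 2)) • (p : ZMod (p ^ 2)) • w = 0 := by
  rw [smul_smul, ← Nat.cast_mul, ← sq, ZMod.natCast_self, zero_smul]

variable (p W) in
/-- Multiplication by `p` as a map `W/pW → W`. -/
noncomputable def mulPQuot : (W ⧸ pSub p W) →ₗ[ZMod (p ^ 2)] W :=
  (pSub p W).liftQ ((p : ZMod (p ^ 2)) • LinearMap.id) (by
    rintro x ⟨w, rfl⟩
    simpa using natCast_smul_natCast_smul w)

@[simp] lemma mulPQuot_mk (w : W) :
    mulPQuot p W (Submodule.Quotient.mk w) = (p : ZMod (p ^ 2)) • w := rfl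

lemma mk_mulPQuot (x : W ⧸ pSub p W) :
    (Submodule.Quotient.mk (mulPQuot p W x) : W ⧸ pSub p W) = 0 := by
  obtain ⟨w, rfl⟩ := Submodule.Quotient.mk_surjective _ x
  exact (Submodule.Quotient.mk_eq_zero _).2 (smul_mem_pSub p W w)

lemma range_mulPQuot : LinearMap.range (mulPQuot p W) = pSub p W :=
  Submodule.range_liftQ _ _ _

lemma mulPQuot_injective (hW : ∀ w : W, (p : ZMod (p ^ 2)) • w = 0 → w ∈ pSub p W) :
    Function.Injective (mulPQuot p W) := by
  rw [injective_iff_map_eq_zero]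
  intro x hx
  obtain ⟨w, rfl⟩ := Submodule.Quotient.mk_surjective _ x
  exact (Submodule.Quotient.mk_eq_zero _).2 (hW w hx)

end

section

variable {p : ℕ} [NeZero p] {V W : Type*} [AddCommGroup V] [Module (ZMod (p ^ 2)) V]
  [AddCommGroup W] [Module (ZMod (p ^ 2)) W]

/-- A `ℤ/p`-linear map between reductions modulo `p`, regarded as a `ℤ/p²`-linear map. -/
noncomputable def toZModSqLinearMap (α : (V ⧸ pSub p V) →ₗ[ZMod p] (W ⧸ pSub p W)) :
    (V ⧸ pSub p V) →ₗ[ZMod (p ^ 2)] (W ⧸ pSub p W) :=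
  α.toAddMonoidHom.toZModLinearMap (p ^ 2)

@[simp] lemma toZModSqLinearMap_apply (α : (V ⧸ pSub p V) →ₗ[ZMod p] (W ⧸ pSub p W))
    (x : V ⧸ pSub p V) : toZModSqLinearMap α x = α x := rfl

lemma exists_inducedMap_eq [Module.Projective (ZMod (p ^ 2)) V]
    (ψ : (V ⧸ pSub p V) →ₗ[ZMod p] (W ⧸ pSub p W)) :
    ∃ φ : V →ₗ[ZMod (p ^ 2)] W, inducedMap p φ = ψ := by
  obtain ⟨φ, hφ⟩ := Module.projective_lifting_property (pSub p W).mkQ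
    (toZModSqLinearMap ψ ∘ₗ (pSub p V).mkQ) (Submodule.mkQ_surjective _)
  refine ⟨φ, LinearMap.ext fun x ↦ ?_⟩
  obtain ⟨v, rfl⟩ := Submodule.Quotient.mk_surjective _ x
  exact LinearMap.congr_fun hφ v

/-- The translate of `φ` by `p` times a map between the reductions modulo `p`. -/
noncomputable def addMulP (φ : V →ₗ[ZMod (p ^ 2)] W)
    (α : (V ⧸ pSub p V) →ₗ[ZMod p] (W ⧸ pSub p W)) : V →ₗ[ZMod (p ^ 2)] W :=
  φ + mulPQuot p W ∘ₗ toZModSqLinearMap α ∘ₗ (pSub p V).mkQ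

lemma addMulP_apply (φ : V →ₗ[ZMod (p ^ 2)] W)
    (α : (V ⧸ pSub p V) →ₗ[ZMod p] (W ⧸ pSub p W)) (v : V) :
    addMulP φ α v = φ v + mulPQuot p W (α (Submodule.Quotient.mk v)) := rfl

lemma inducedMap_addMulP (φ : V →ₗ[ZMod (p ^ 2)] W)
    (α : (V ⧸ pSub p V) →ₗ[ZMod p] (W ⧸ pSub p W)) :
    inducedMap p (addMulP φ α) = inducedMap p φ := by
  refine LinearMap.ext fun x ↦ ?_
  obtain ⟨v, rfl⟩ := Submodule.Quotient.mk_surjective _ x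
  rw [inducedMap_mk, inducedMap_mk, addMulP_apply, Submodule.Quotient.mk_add, mk_mulPQuot,
    add_zero]

lemma addMulP_injective (hW : ∀ w : W, (p : ZMod (p ^ 2)) • w = 0 → w ∈ pSub p W)
    (φ : V →ₗ[ZMod (p ^ 2)] W) : Function.Injective (addMulP φ) := by
  intro α α' h
  refine LinearMap.ext fun x ↦ ?_
  obtain ⟨v, rfl⟩ := Submodule.Quotient.mk_surjective _ x
  have hv := LinearMap.congr_fun h v
  rw [addMulP_apply, addMulP_apply] at hv
  exact mulPQuot_injective hW (add_left_cancel hv)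

lemma exists_addMulP_eq [Module.Projective (ZMod (p ^ 2)) V] {φ φ' : V →ₗ[ZMod (p ^ 2)] W}
    (h : inducedMap p φ' = inducedMap p φ) : ∃ α, addMulP φ α = φ' := by
  have hmem (v : V) : (φ' - φ) v ∈ pSub p W := by
    rw [LinearMap.sub_apply]
    exact (Submodule.Quotient.eq _).1 (LinearMap.congr_fun h (Submodule.Quotient.mk v))
  obtain ⟨lam, hlam⟩ := Module.projective_lifting_property
    ((p : ZMod (p ^ 2)) • (LinearMap.id : W →ₗ[ZMod (p ^ 2)] W)).rangeRestrict
    ((φ' - φ).codRestrict (pSub p W) hmem) (LinearMap.surjective_rangeRestrict _)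
  refine ⟨inducedMap p lam, LinearMap.ext fun v ↦ ?_⟩
  have hv : (p : ZMod (p ^ 2)) • lam v = φ' v - φ v :=
    congrArg Subtype.val (LinearMap.congr_fun hlam v)
  rw [addMulP_apply, inducedMap_mk, mulPQuot_mk, hv, add_sub_cancel]

variable {ψ : (V ⧸ pSub p V) →ₗ[ZMod p] (W ⧸ pSub p W)} {φ : V →ₗ[ZMod (p ^ 2)] W}

lemma exists_eq_smul_of_mem_ker (hφ : inducedMap p φ = ψ) {v : V}
    (hv : Submodule.Quotient.mk v ∈ LinearMap.ker ψ) :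
    ∃ w, φ v = (p : ZMod (p ^ 2)) • w := by
  rw [LinearMap.mem_ker, ← hφ, inducedMap_mk, Submodule.Quotient.mk_eq_zero] at hv
  obtain ⟨w, hw⟩ := hv
  exact ⟨w, hw.symm⟩

lemma mk_mk_eq_of_eq_smul (hW : ∀ w : W, (p : ZMod (p ^ 2)) • w = 0 → w ∈ pSub p W)
    (hφ : inducedMap p φ = ψ) {v v' : V} {w w' : W}
    (hv : (Submodule.Quotient.mk v : V ⧸ pSub p V) = Submodule.Quotient.mk v')
    (hw : φ v = (p : ZMod (p ^ 2)) • w) (hw' : φ v' = (p : ZMod (p ^ 2)) • w') :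
    (Submodule.Quotient.mk (Submodule.Quotient.mk w) :
      (W ⧸ pSub p W) ⧸ LinearMap.range ψ) =
      Submodule.Quotient.mk (Submodule.Quotient.mk w') := by
  obtain ⟨u, hu⟩ := (Submodule.Quotient.eq _).1 hv
  have hu' : (p : ZMod (p ^ 2)) • u = v - v' := hu
  refine (Submodule.Quotient.eq _).2 ⟨Submodule.Quotient.mk u, ?_⟩
  rw [← hφ, inducedMap_mk, ← Submodule.Quotient.mk_sub, Submodule.Quotient.eq]
  refine hW _ ?_
  rw [smul_sub, smul_sub, ← hw, ← hw', ← map_smul, hu', map_sub, sub_self]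

lemma exists_isBockstein (hW : ∀ w : W, (p : ZMod (p ^ 2)) • w = 0 → w ∈ pSub p W)
    (hφ : inducedMap p φ = ψ) : ∃ β, IsBockstein p ψ φ β := by
  have hlift (x : LinearMap.ker ψ) : ∃ v : V, ∃ w : W,
      Submodule.Quotient.mk v = (x : V ⧸ pSub p V) ∧ φ v = (p : ZMod (p ^ 2)) • w := by
    obtain ⟨x, hx⟩ := x
    obtain ⟨v, rfl⟩ := Submodule.Quotient.mk_surjective _ x
    obtain ⟨w, hw⟩ := exists_eq_smul_of_mem_ker hφ hx
    exact ⟨v, w, rfl, hw⟩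
  choose v w hv hw using hlift
  let f : LinearMap.ker ψ →+ (W ⧸ pSub p W) ⧸ LinearMap.range ψ :=
    AddMonoidHom.mk' (fun x ↦ Submodule.Quotient.mk (Submodule.Quotient.mk (w x))) (by
      intro x y
      rw [← Submodule.Quotient.mk_add, ← Submodule.Quotient.mk_add]
      refine mk_mk_eq_of_eq_smul hW hφ (v := v (x + y)) (v' := v x + v y) ?_ (hw _) ?_
      · rw [Submodule.Quotient.mk_add, hv, hv, hv, Submodule.coe_add]
      · rw [map_add, hw, hw, smul_add])
  exact ⟨f.toZModLinearMap p, fun v' hv' w' hw' ↦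
    mk_mk_eq_of_eq_smul hW hφ (hv ⟨_, hv'⟩) (hw _) hw'⟩

/-- The map `Hom(V/pV, W/pW) → Hom(ker ψ, coker ψ)` obtained by restricting and projecting. -/
noncomputable def kerToCoker (ψ : (V ⧸ pSub p V) →ₗ[ZMod p] (W ⧸ pSub p W)) :
    ((V ⧸ pSub p V) →ₗ[ZMod p] (W ⧸ pSub p W)) →+
      (LinearMap.ker ψ →ₗ[ZMod p] ((W ⧸ pSub p W) ⧸ LinearMap.range ψ)) where
  toFun α := (LinearMap.range ψ).mkQ ∘ₗ α ∘ₗ (LinearMap.ker ψ).subtype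
  map_zero' := by ext; simp
  map_add' α α' := by ext; simp

lemma kerToCoker_apply (α : (V ⧸ pSub p V) →ₗ[ZMod p] (W ⧸ pSub p W)) (x : LinearMap.ker ψ) :
    kerToCoker ψ α x = Submodule.Quotient.mk (α x) := rfl

lemma isBockstein_addMulP_iff (hφ : inducedMap p φ = ψ)
    {β₀ β : LinearMap.ker ψ →ₗ[ZMod p] ((W ⧸ pSub p W) ⧸ LinearMap.range ψ)}
    (hβ₀ : IsBockstein p ψ φ β₀) (α : (V ⧸ pSub p V) →ₗ[ZMod p] (W ⧸ pSub p W)) :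
    IsBockstein p ψ (addMulP φ α) β ↔ kerToCoker ψ α = β - β₀ := by
  constructor
  · intro h
    refine LinearMap.ext fun ⟨x, hx⟩ ↦ ?_
    obtain ⟨v, rfl⟩ := Submodule.Quotient.mk_surjective _ x
    obtain ⟨w, hw⟩ := exists_eq_smul_of_mem_ker hφ hx
    obtain ⟨u, hu⟩ := Submodule.Quotient.mk_surjective _ (α (Submodule.Quotient.mk v))
    have hwu : addMulP φ α v = (p : ZMod (p ^ 2)) • (w + u) := by
      rw [addMulP_apply, ← hu, mulPQuot_mk, hw, smul_add]
    rw [LinearMap.sub_apply, h v hx _ hwu, hβ₀ v hx _ hw, kerToCoker_apply, ← hu,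
      Submodule.Quotient.mk_add, Submodule.Quotient.mk_add, add_sub_cancel_left]
  · intro h v hx w hw
    obtain ⟨u, hu⟩ := Submodule.Quotient.mk_surjective _ (α (Submodule.Quotient.mk v))
    have hwu : φ v = (p : ZMod (p ^ 2)) • (w - u) := by
      rw [addMulP_apply, ← hu, mulPQuot_mk] at hw
      rw [smul_sub, ← hw, add_sub_cancel_right]
    have hx' := LinearMap.congr_fun h ⟨_, hx⟩
    rw [LinearMap.sub_apply, hβ₀ v hx _ hwu, kerToCoker_apply, ← hu,
      eq_sub_iff_add_eq, ← Submodule.Quotient.mk_add, ← Submodule.Quotient.mk_add,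
      add_sub_cancel] at hx'
    exact hx'.symm

end

lemma kerToCoker_surjective {p : ℕ} [Fact p.Prime] {V W : Type*} [AddCommGroup V]
    [Module (ZMod (p ^ 2)) V] [AddCommGroup W] [Module (ZMod (p ^ 2)) W]
    (ψ : (V ⧸ pSub p V) →ₗ[ZMod p] (W ⧸ pSub p W)) :
    Function.Surjective (kerToCoker ψ) := by
  intro γ
  obtain ⟨g, hg⟩ := Module.projective_lifting_property (LinearMap.range ψ).mkQ γ
    (Submodule.mkQ_surjective _)
  obtain ⟨α, hα⟩ := LinearMap.exists_extend g
  refine ⟨α, ?_⟩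
  rw [← hg, ← hα]
  rfl

lemma ZMod.exists_natCast_mul_eq_of_natCast_mul_eq_zero {p : ℕ} [NeZero p] (x : ZMod (p ^ 2))
    (hx : (p : ZMod (p ^ 2)) * x = 0) : ∃ y, (p : ZMod (p ^ 2)) * y = x := by
  rw [← ZMod.natCast_zmod_val x, ← Nat.cast_mul, ZMod.natCast_eq_zero_iff] at hx
  obtain ⟨c, hc⟩ := Nat.dvd_of_mul_dvd_mul_left (NeZero.pos p) ((dvd_of_eq (sq p).symm).trans hx)
  exact ⟨c, by rw [← Nat.cast_mul, ← hc, ZMod.natCast_zmod_val]⟩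

lemma mem_pSub_pi_of_smul_eq_zero {p : ℕ} [NeZero p] {ι : Type*} (w : ι → ZMod (p ^ 2))
    (hw : (p : ZMod (p ^ 2)) • w = 0) : w ∈ pSub p (ι → ZMod (p ^ 2)) := by
  choose y hy using fun i ↦
    ZMod.exists_natCast_mul_eq_of_natCast_mul_eq_zero (w i) (congrFun hw i)
  exact ⟨y, funext hy⟩

lemma finrank_pi_quotient_pSub (p : ℕ) [Fact p.Prime] (n : ℕ) :
    Module.finrank (ZMod p) ((Fin n → ZMod (p ^ 2)) ⧸ pSub p (Fin n → ZMod (p ^ 2))) = n := by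
  set V := Fin n → ZMod (p ^ 2)
  have hsub : Nat.card (pSub p V) = Nat.card (V ⧸ pSub p V) := by
    rw [Nat.card_congr (LinearEquiv.ofInjective (mulPQuot p V)
      (mulPQuot_injective mem_pSub_pi_of_smul_eq_zero)).toEquiv, range_mulPQuot]
  have hcard := (pSub p V).card_eq_card_quotient_mul_card
  have hV : Nat.card V = p ^ (2 * n) := by
    rw [Nat.card_fun, Nat.card_zmod, Nat.card_fin, pow_mul]
  rw [hsub, hV, Module.natCard_eq_pow_finrank (K := ZMod p) (V := V ⧸ pSub p V), Nat.card_zmod,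
    ← pow_add] at hcard
  have hn : 2 * n = _ := Nat.pow_right_injective (Fact.out : p.Prime).two_le hcard
  exact Nat.eq_of_mul_eq_mul_left two_pos ((two_mul _).trans hn.symm)

lemma natCard_inducedMap_eq {p : ℕ} [Fact p.Prime] {V W : Type*} [AddCommGroup V]
    [Module (ZMod (p ^ 2)) V] [Module.Projective (ZMod (p ^ 2)) V] [AddCommGroup W]
    [Module (ZMod (p ^ 2)) W] (hW : ∀ w : W, (p : ZMod (p ^ 2)) • w = 0 → w ∈ pSub p W)
    (ψ : (V ⧸ pSub p V) →ₗ[ZMod p] (W ⧸ pSub p W))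
    (β : LinearMap.ker ψ →ₗ[ZMod p] ((W ⧸ pSub p W) ⧸ LinearMap.range ψ)) :
    Nat.card {φ : V →ₗ[ZMod (p ^ 2)] W // inducedMap p φ = ψ} =
      Nat.card (LinearMap.ker ψ →ₗ[ZMod p] ((W ⧸ pSub p W) ⧸ LinearMap.range ψ)) *
        Nat.card {φ : V →ₗ[ZMod (p ^ 2)] W // inducedMap p φ = ψ ∧ IsBockstein p ψ φ β} := by
  obtain ⟨φ₀, hφ₀⟩ := exists_inducedMap_eq ψ
  obtain ⟨β₀, hβ₀⟩ := exists_isBockstein hW hφ₀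
  have hinj := addMulP_injective hW φ₀
  have htotal : Nat.card {φ : V →ₗ[ZMod (p ^ 2)] W // inducedMap p φ = ψ} =
      Nat.card ((V ⧸ pSub p V) →ₗ[ZMod p] (W ⧸ pSub p W)) := by
    refine (Nat.card_congr (Equiv.ofBijective
      (fun α ↦ ⟨addMulP φ₀ α, (inducedMap_addMulP φ₀ α).trans hφ₀⟩) ⟨?_, ?_⟩)).symm
    · exact fun α α' h ↦ hinj (congrArg Subtype.val h)
    · rintro ⟨φ, hφ⟩
      obtain ⟨α, rfl⟩ := exists_addMulP_eq (hφ.trans hφ₀.symm)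
      exact ⟨α, rfl⟩
  obtain ⟨α₀, hα₀⟩ := kerToCoker_surjective ψ (β - β₀)
  have hfiber : Nat.card {φ : V →ₗ[ZMod (p ^ 2)] W //
      inducedMap p φ = ψ ∧ IsBockstein p ψ φ β} = Nat.card (kerToCoker ψ).ker := by
    refine (Nat.card_congr (Equiv.ofBijective
      (fun α ↦ ⟨addMulP φ₀ (α₀ + α), (inducedMap_addMulP φ₀ _).trans hφ₀,
        (isBockstein_addMulP_iff hφ₀ hβ₀ _).2 (by
          rw [map_add, AddMonoidHom.mem_ker.1 α.2, add_zero, hα₀])⟩) ⟨?_, ?_⟩)).symm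
    · exact fun α α' h ↦ Subtype.ext (add_left_cancel (hinj (congrArg Subtype.val h)))
    · rintro ⟨φ, hφ, hB⟩
      obtain ⟨α, rfl⟩ := exists_addMulP_eq (hφ.trans hφ₀.symm)
      rw [isBockstein_addMulP_iff hφ₀ hβ₀] at hB
      exact ⟨⟨α - α₀, by rw [AddMonoidHom.mem_ker, map_sub, hB, hα₀, sub_self]⟩,
        Subtype.ext (congrArg (addMulP φ₀) (add_sub_cancel α₀ α))⟩
  have hmul := (kerToCoker ψ).ker.card_eq_card_quotient_mul_card_addSubgroup
  rw [Nat.card_congr (QuotientAddGroup.quotientKerEquivOfSurjective _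
    (kerToCoker_surjective ψ)).toEquiv] at hmul
  rw [htotal, hfiber, hmul]

/-- Choosing the `m × n` matrix `φ` over `ℤ/p²` uniformly at random,
the conditional probability — i.e. the counting ratio — that the Bockstein homomorphism
of `φ` equals a fixed `β : ker ψ → coker ψ`, given that `φ` reduces to `ψ` mod `p`,
is `1 / p ^ (k(m−n+k))`, where `k = dim ker ψ`.  (Here `m − n + k` is the natural
number `m − (n − k) = dim coker ψ`.) -/
theorem bockstein_uniform (p : ℕ) [Fact p.Prime] (n m k : ℕ)
    (ψ : ((Fin n → ZMod (p ^ 2)) ⧸ pSub p (Fin n → ZMod (p ^ 2))) →ₗ[ZMod p]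
      ((Fin m → ZMod (p ^ 2)) ⧸ pSub p (Fin m → ZMod (p ^ 2))))
    (hk : k = Module.finrank (ZMod p) ↥(LinearMap.ker ψ))
    (β : ↥(LinearMap.ker ψ) →ₗ[ZMod p]
      (((Fin m → ZMod (p ^ 2)) ⧸ pSub p (Fin m → ZMod (p ^ 2))) ⧸ LinearMap.range ψ)) :
    (Nat.card {φ : (Fin n → ZMod (p ^ 2)) →ₗ[ZMod (p ^ 2)] (Fin m → ZMod (p ^ 2)) //
        inducedMap p φ = ψ ∧ IsBockstein p ψ φ β} : ℚ) /
      (Nat.card {φ : (Fin n → ZMod (p ^ 2)) →ₗ[ZMod (p ^ 2)] (Fin m → ZMod (p ^ 2)) //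
        inducedMap p φ = ψ} : ℚ) =
      1 / (p : ℚ) ^ (k * (m - (n - k))) := by
  have hrange := LinearMap.finrank_range_add_finrank_ker ψ
  have hcoker := (LinearMap.range ψ).finrank_quotient_add_finrank
  rw [finrank_pi_quotient_pSub, ← hk] at hrange
  rw [finrank_pi_quotient_pSub] at hcoker
  have hdim : Module.finrank (ZMod p) (((Fin m → ZMod (p ^ 2)) ⧸ pSub p (Fin m → ZMod (p ^ 2))) ⧸
      LinearMap.range ψ) = m - (n - k) := by lia
  have hhom : Nat.card (LinearMap.ker ψ →ₗ[ZMod p]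
      (((Fin m → ZMod (p ^ 2)) ⧸ pSub p (Fin m → ZMod (p ^ 2))) ⧸ LinearMap.range ψ)) =
      p ^ (k * (m - (n - k))) := by
    rw [Module.natCard_eq_pow_finrank (K := ZMod p), Nat.card_zmod, Module.finrank_linearMap,
      ← hk, hdim]
  have hcard := natCard_inducedMap_eq mem_pSub_pi_of_smul_eq_zero ψ β
  have hfin : Finite ((Fin n → ZMod (p ^ 2)) →ₗ[ZMod (p ^ 2)] (Fin m → ZMod (p ^ 2))) :=
    DFunLike.finite _
  have hne : Nonempty {φ : (Fin n → ZMod (p ^ 2)) →ₗ[ZMod (p ^ 2)] (Fin m → ZMod (p ^ 2)) //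
      inducedMap p φ = ψ} := nonempty_subtype.2 (exists_inducedMap_eq ψ)
  have hpos := (Nat.card_pos (α := {φ : (Fin n → ZMod (p ^ 2)) →ₗ[ZMod (p ^ 2)]
    (Fin m → ZMod (p ^ 2)) // inducedMap p φ = ψ})).ne'
  rw [hcard] at hpos ⊢
  have hfiber := Nat.cast_ne_zero (R := ℚ).2 (right_ne_zero_of_mul hpos)
  rw [hhom, Nat.cast_mul, Nat.cast_pow, div_mul_cancel_right₀ hfiber, one_div]
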